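/- Let G be a closed subgroup of O(N) satisfying (G2) and σ : G → {1,−1} a continuous surjective group homomorphism. If Ω is a G-invariant nonempty open domain in ℝ^N whose set of G-fixed points Ω^G = {x ∈ Ω : gx = x for all g ∈ G} is nonempty, then m(Ω)^σ_G = m(ℝ^N)^σ_G. -/

import Mathlib

open MeasureTheory Real

noncomputable section

abbrev Euc (N : ℕ) := EuclideanSpace ℝ (Fin N)

/-- The critical exponent `2*_s = 2N/(N-2s)`. -/
def twoStar (N : ℕ) (s : ℝ) : ℝ := 2 * N / (N - 2 * s)

/-- Square of the Gagliardo seminorm `‖u‖²`. -/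
def gagSq (N : ℕ) (s : ℝ) (u : Euc N → ℝ) : ℝ :=
  ∫ p : Euc N × Euc N, (u p.1 - u p.2) ^ 2 / dist p.1 p.2 ^ ((N : ℝ) + 2 * s)

/-- The Gagliardo seminorm `‖u‖`. -/
def gagNorm (N : ℕ) (s : ℝ) (u : Euc N → ℝ) : ℝ := Real.sqrt (gagSq N s u)

/-- Finiteness of the Gagliardo seminorm (`‖u‖ < ∞`). -/
def GagFinite (N : ℕ) (s : ℝ) (u : Euc N → ℝ) : Prop :=
  Integrable (fun p : Euc N × Euc N => (u p.1 - u p.2) ^ 2 / dist p.1 p.2 ^ ((N : ℝ) + 2 * s))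

/-- Membership in `Ḣ^s(Ω)`: measurable, in `L^{2*_s}(ℝ^N)`, finite Gagliardo seminorm,
and vanishing a.e. outside `Ω`. -/
structure MemHs (N : ℕ) (s : ℝ) (Ω : Set (Euc N)) (u : Euc N → ℝ) : Prop where
  meas : Measurable u
  lp : Integrable fun x : Euc N => |u x| ^ twoStar N s
  fin : GagFinite N s u
  vanish : ∀ᵐ x : Euc N, x ∉ Ω → u x = 0

/-- The energy functional `E(u;Ω)`. -/
def energy (N : ℕ) (s : ℝ) (Ω : Set (Euc N)) (u : Euc N → ℝ) : ℝ :=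
  (1 / 2) * gagSq N s u - (1 / twoStar N s) * ∫ x in Ω, |u x| ^ twoStar N s

/-- The Nehari functional `N(u;Ω)`. -/
def nehariFun (N : ℕ) (s : ℝ) (Ω : Set (Euc N)) (u : Euc N → ℝ) : ℝ :=
  gagSq N s u - ∫ x in Ω, |u x| ^ twoStar N s

/-- The pairing `⟨E'(u), v⟩` (with domain `Ω`). -/
def pairing (N : ℕ) (s : ℝ) (Ω : Set (Euc N)) (u v : Euc N → ℝ) : ℝ :=
  (∫ p : Euc N × Euc N, (u p.1 - u p.2) * (v p.1 - v p.2) / dist p.1 p.2 ^ ((N : ℝ) + 2 * s))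
    - ∫ x in Ω, |u x| ^ (twoStar N s - 2) * u x * v x

/-- The sharp fractional Sobolev constant `S(N,s)`. -/
def sobolevS (N : ℕ) (s : ℝ) : ℝ :=
  (2 : ℝ) ^ (-(2 * s)) * Real.pi ^ (-s) *
    (Real.Gamma ((N - 2 * s) / 2) / Real.Gamma ((N + 2 * s) / 2)) *
    (Real.Gamma N / Real.Gamma (N / 2)) ^ (2 * s / N)

/-- The orthogonal group `O(N)`. -/
abbrev ONgrp (N : ℕ) := Matrix.orthogonalGroup (Fin N) ℝ

/-- The linear action of `O(N)` on `ℝ^N`. -/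
def ogAct {N : ℕ} (g : ONgrp N) (x : Euc N) : Euc N :=
  Matrix.toEuclideanLin (g : Matrix (Fin N) (Fin N) ℝ) x

/-- `σ`-equivariance of `u : ℝ^N → ℝ` under a subgroup `G` of `O(N)`:
`u (g x) = σ(g) u (x)` for all `g ∈ G`, `x ∈ ℝ^N`. -/
def IsEquivariant {N : ℕ} (G : Subgroup (ONgrp N)) (σ : G →* ℤˣ) (u : Euc N → ℝ) : Prop :=
  ∀ g : G, ∀ x : Euc N, u (ogAct (g : ONgrp N) x) = ((σ g : ℤ) : ℝ) * u x

/-- `G`-invariance of a set. -/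
def IsInvariantSet {N : ℕ} (G : Subgroup (ONgrp N)) (Ω : Set (Euc N)) : Prop :=
  ∀ g : G, ∀ x ∈ Ω, ogAct (g : ONgrp N) x ∈ Ω

/-- Condition (G1): every `G`-orbit is infinite or a single point. -/
def CondG1 {N : ℕ} (G : Subgroup (ONgrp N)) : Prop :=
  ∀ x : Euc N, ({y : Euc N | ∃ g : G, ogAct (g : ONgrp N) x = y}).Infinite ∨
    ∀ g : G, ogAct (g : ONgrp N) x = x

/-- Condition (G2): there is a point `ξ` with `σ = 1` on the stabilizer of `ξ`. -/
def CondG2 {N : ℕ} (G : Subgroup (ONgrp N)) (σ : G →* ℤˣ) : Prop :=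
  ∃ ξ : Euc N, ∀ g : G, ogAct (g : ONgrp N) ξ = ξ → σ g = 1

/-- The Nehari level `m(Ω)^σ_G = inf { E(u;Ω) : u ∈ N(Ω)^σ_G }`. -/
def mval (N : ℕ) (s : ℝ) (Ω : Set (Euc N)) (G : Subgroup (ONgrp N)) (σ : G →* ℤˣ) : ℝ :=
  sInf {c : ℝ | ∃ u : Euc N → ℝ, MemHs N s Ω u ∧ IsEquivariant G σ u ∧
    ¬ (∀ᵐ x : Euc N, u x = 0) ∧ nehariFun N s Ω u = 0 ∧ c = energy N s Ω u}

/-! Every energy on the Nehari manifold is the value of a continuous function of the pair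
`(‖u‖², ∫ |u|^{2*_s})` for some `u ≠ 0` in `Ḣ^s(Ω)^σ_G`. The critical dilations about a `G`-fixed
point preserve this pair and equivariance, and can shrink any bounded support into `Ω`; so it is
enough that the pair of an arbitrary equivariant function is a limit of pairs of equivariant
functions with bounded support. Multiplying by a radial cut-off keeps equivariance, but its error
is only known to be integrable for square-integrable functions, which `u` need not be; soft
thresholding, being odd and `1`-Lipschitz, first replaces `u` by such functions. -/

section

open Bornology Filter Function Module Set Topology

lemma sInf_closure_real (S : Set ℝ) : sInf (closure S) = sInf S := by
  rcases S.eq_empty_or_nonempty with rfl | hne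
  · rw [closure_empty]
  by_cases hbdd : BddBelow S
  · have hglb : IsGLB (closure S) (sInf S) :=
      (isGLB_iff_of_subset_of_subset_closure subset_closure subset_rfl).1 (isGLB_csInf hne hbdd)
    exact hglb.csInf_eq hne.closure
  · rw [Real.sInf_of_not_bddBelow hbdd,
      Real.sInf_of_not_bddBelow fun h => hbdd (h.mono subset_closure)]

/-- Soft thresholding `t ↦ sign t * (|t| - e)⁺` at height `e`, written as `t` minus its
truncation to `[-e, e]`. -/
def softThreshold (e t : ℝ) : ℝ := t - max (-e) (min e t)

lemma softThreshold_neg {e : ℝ} (he : 0 ≤ e) (t : ℝ) :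
    softThreshold e (-t) = -softThreshold e t := by
  simp only [softThreshold, max_def, min_def]
  split_ifs <;> linarith

lemma softThreshold_zero {e : ℝ} (he : 0 ≤ e) : softThreshold e 0 = 0 := by
  simp [softThreshold, he]

lemma lipschitzWith_softThreshold (e : ℝ) : LipschitzWith 1 (softThreshold e) := by
  refine LipschitzWith.of_dist_le_mul fun a b => ?_
  rw [NNReal.coe_one, one_mul, Real.dist_eq, Real.dist_eq]
  rcases abs_cases (a - b) with ⟨h, h'⟩ | ⟨h, h'⟩ <;> rw [h, abs_le] <;>
    simp only [softThreshold, max_def, min_def] <;> split_ifs <;> constructor <;> linarith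

lemma softThreshold_eq_zero {e a : ℝ} (ha : |a| ≤ e) : softThreshold e a = 0 := by
  obtain ⟨hle, hge⟩ := abs_le.1 ha
  rw [softThreshold, min_eq_right hge, max_eq_right hle, sub_self]

lemma tendsto_softThreshold (a : ℝ) :
    Tendsto (fun e => softThreshold e a) (𝓝[>] 0) (𝓝 a) := by
  have hcont : Continuous fun e => softThreshold e a := by unfold softThreshold; fun_prop
  exact (hcont.tendsto' 0 a (by simp [softThreshold])).mono_left nhdsWithin_le_nhds

lemma abs_le_of_lipschitzWith_one {φ : ℝ → ℝ} (hφ : LipschitzWith 1 φ) (hφ0 : φ 0 = 0) (a : ℝ) :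
    |φ a| ≤ |a| := by
  simpa [hφ0, Real.dist_eq] using hφ.dist_le_mul a 0

lemma softThreshold_sq_le {e p : ℝ} (he : 0 < e) (hp : 2 ≤ p) (a : ℝ) :
    softThreshold e a ^ 2 ≤ e ^ (2 - p) * |a| ^ p := by
  rcases le_or_gt |a| e with hae | hae
  · rw [softThreshold_eq_zero hae, zero_pow two_ne_zero]; positivity
  · have ha : 0 < |a| := he.trans hae
    calc softThreshold e a ^ 2 ≤ |a| ^ 2 := by
          rw [sq_le_sq, abs_abs]
          exact abs_le_of_lipschitzWith_one (lipschitzWith_softThreshold e)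
            (softThreshold_zero he.le) a
      _ = |a| ^ (2 - p) * |a| ^ p := by
          rw [← Real.rpow_add ha, sub_add_cancel, Real.rpow_two]
      _ ≤ e ^ (2 - p) * |a| ^ p := by
          exact mul_le_mul_of_nonneg_right
            (Real.rpow_le_rpow_of_nonpos he hae.le (by linarith)) (by positivity)

section Cutoff

variable {E : Type*} [SeminormedAddCommGroup E]

/-- The radial cut-off function which is `1` on the ball of radius `R`, `0` outside the ball of
radius `2 * R` and affine in the norm in between. -/
def cutoff (R : ℝ) (x : E) : ℝ := max (min (2 - ‖x‖ / R) 1) 0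

lemma cutoff_nonneg (R : ℝ) (x : E) : 0 ≤ cutoff R x := le_max_right _ _

lemma cutoff_le_one (R : ℝ) (x : E) : cutoff R x ≤ 1 := max_le (min_le_right _ _) zero_le_one

lemma isBounded_support_cutoff {R : ℝ} (hR : 0 < R) :
    IsBounded (support (cutoff R : E → ℝ)) := by
  refine isBounded_iff_forall_norm_le.2 ⟨2 * R, fun x hx => ?_⟩
  contrapose! hx
  rw [notMem_support]
  have h2 : 2 ≤ ‖x‖ / R := (le_div_iff₀ hR).2 hx.le
  exact max_eq_right ((min_le_left _ _).trans (by linarith))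

lemma tendsto_cutoff_atTop (x : E) : Tendsto (fun R => cutoff R x) atTop (𝓝 1) := by
  have h0 : Tendsto (fun R : ℝ => ‖x‖ / R) atTop (𝓝 0) := tendsto_id.const_div_atTop _
  simpa [cutoff] using
    ((h0.const_sub 2).min (tendsto_const_nhds (x := 1))).max (tendsto_const_nhds (x := 0))

lemma lipschitzWith_cutoff {R : ℝ} (hR : 1 ≤ R) : LipschitzWith 1 (cutoff R : E → ℝ) := by
  refine (LipschitzWith.min_const ?_ 1).max_const 0
  refine LipschitzWith.of_dist_le_mul fun x y => ?_
  have hR0 : 0 < R := by linarith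
  calc dist (2 - ‖x‖ / R) (2 - ‖y‖ / R) = |‖x‖ - ‖y‖| / R := by
        rw [dist_sub_left, Real.dist_eq, ← sub_div, abs_div, abs_of_pos hR0]
    _ ≤ |‖x‖ - ‖y‖| := div_le_self (abs_nonneg _) hR
    _ ≤ ‖x - y‖ := abs_norm_sub_norm_le x y
    _ = (1 : NNReal) * dist x y := by rw [NNReal.coe_one, one_mul, dist_eq_norm]

lemma cutoff_sub_sq_le {R : ℝ} (hR : 1 ≤ R) (x y : E) :
    (cutoff R x - cutoff R y) ^ 2 ≤ min 1 (‖x - y‖ ^ 2) := by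
  refine le_min ?_ ?_
  · rw [sq_le_one_iff_abs_le_one, abs_le]
    constructor <;>
      linarith [cutoff_nonneg R x, cutoff_nonneg R y, cutoff_le_one R x, cutoff_le_one R y]
  · rw [sq_le_sq, abs_norm, ← Real.dist_eq, ← dist_eq_norm]
    simpa only [NNReal.coe_one, one_mul] using (lipschitzWith_cutoff hR).dist_le_mul x y

end Cutoff

section TruncatedKernel

variable {E : Type*} [NormedAddCommGroup E]

/-- The kernel `min(1, |z|²) / |z|^α`, which dominates the difference quotients of a bounded
`1`-Lipschitz function. -/
def truncatedKernel (α : ℝ) (z : E) : ℝ := min 1 (‖z‖ ^ 2) / ‖z‖ ^ α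

lemma integrable_truncatedKernel [NormedSpace ℝ E] [FiniteDimensional ℝ E] [Nontrivial E]
    [MeasurableSpace E] [BorelSpace E] (μ : Measure E) [μ.IsAddHaarMeasure] {α : ℝ}
    (hα : finrank ℝ E < α) (hα' : α < finrank ℝ E + 2) :
    Integrable (truncatedKernel α : E → ℝ) μ := by
  have hpow : ∀ {y : ℝ}, 0 < y →
      y ^ (finrank ℝ E - 1) / y ^ α = y ^ ((finrank ℝ E : ℝ) - 1 - α) := fun hy => by
    rw [Real.rpow_sub hy, ← Nat.cast_pred finrank_pos, Real.rpow_natCast]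
  refine (integrable_fun_norm_addHaar μ (f := fun r : ℝ => min 1 (r ^ 2) / r ^ α)).2 ?_
  simp only [smul_eq_mul]
  rw [← Ioc_union_Ioi_eq_Ioi zero_le_one]
  refine IntegrableOn.union ?_ ?_
  · have hnear := (intervalIntegral.intervalIntegrable_rpow' (a := 0) (b := 1)
      (r := (finrank ℝ E : ℝ) - 1 - α + 2) (by linarith)).1
    refine hnear.congr_fun (fun y hy => ?_) measurableSet_Ioc
    dsimp only
    rw [min_eq_right (pow_le_one₀ hy.1.le hy.2), Real.rpow_add hy.1, ← hpow hy.1, Real.rpow_two]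
    ring
  · have hfar := integrableOn_Ioi_rpow_of_lt (a := (finrank ℝ E : ℝ) - 1 - α) (c := 1)
      (by linarith) one_pos
    refine hfar.congr_fun (fun y (hy : 1 < y) => ?_) measurableSet_Ioi
    dsimp only
    rw [min_eq_left (one_le_pow₀ hy.le), ← hpow (one_pos.trans hy)]
    ring

end TruncatedKernel

lemma exists_dilation_eq_zero_off_nhds {E F : Type*} [NormedAddCommGroup E] [NormedSpace ℝ E]
    [Zero F] {w : E → F} (hw : IsBounded (support w)) {Ω : Set E} {x₀ : E} (hΩ : Ω ∈ 𝓝 x₀) :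
    ∃ r : ℝ, 0 < r ∧ ∀ x ∉ Ω, w (r • (x - x₀)) = 0 := by
  obtain ⟨R, hR, hwR⟩ := hw.exists_pos_norm_lt
  obtain ⟨δ, hδ, hball⟩ := Metric.mem_nhds_iff.1 hΩ
  refine ⟨R / δ, by positivity, fun x hx => of_not_not fun hne => hx (hball ?_)⟩
  have hlt := hwR _ hne
  rw [norm_smul, Real.norm_of_nonneg (by positivity), div_mul_eq_mul_div, div_lt_iff₀ hδ] at hlt
  rw [mem_ball_iff_norm]
  exact lt_of_mul_lt_mul_left hlt hR.le

variable {N : ℕ} {s : ℝ}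

lemma two_lt_twoStar (hs0 : 0 < s) (hsN : 2 * s < N) : 2 < twoStar N s := by
  rw [twoStar, lt_div_iff₀ (by linarith)]
  linarith

lemma norm_ogAct (g : ONgrp N) (x : Euc N) : ‖ogAct g x‖ = ‖x‖ :=
  ContinuousLinearMap.norm_map_of_mem_unitary
    (Unitary.map_mem (Matrix.toEuclideanCLM (n := Fin N) (𝕜 := ℝ)) g.2) x

/-- The integrand `|u(x) - u(y)|² / |x - y|^(N+2s)` of the Gagliardo seminorm `gagSq`. -/
def gagIntegrand (N : ℕ) (s : ℝ) (u : Euc N → ℝ) (p : Euc N × Euc N) : ℝ :=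
  (u p.1 - u p.2) ^ 2 / dist p.1 p.2 ^ ((N : ℝ) + 2 * s)

/-- The integral `∫ |u|^{2*_s}` over the whole space. -/
def critInt (N : ℕ) (s : ℝ) (u : Euc N → ℝ) : ℝ := ∫ x, |u x| ^ twoStar N s

/-- The pair `(‖u‖², ∫ |u|^{2*_s})`, through which `u` enters the energy and the Nehari
functional. -/
def gagCrit (N : ℕ) (s : ℝ) (u : Euc N → ℝ) : ℝ × ℝ := (gagSq N s u, critInt N s u)

lemma gagIntegrand_nonneg (u : Euc N → ℝ) (p : Euc N × Euc N) : 0 ≤ gagIntegrand N s u p := by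
  unfold gagIntegrand; positivity

lemma measurable_gagIntegrand {u : Euc N → ℝ} (hu : Measurable u) :
    Measurable (gagIntegrand N s u) := by
  unfold gagIntegrand; fun_prop

lemma gagFinite_of_le {w : Euc N → ℝ} {b : Euc N × Euc N → ℝ} (hw : Measurable w)
    (hb : Integrable b) (hwb : ∀ p, gagIntegrand N s w p ≤ b p) : GagFinite N s w :=
  hb.mono' (measurable_gagIntegrand hw).aestronglyMeasurable <| .of_forall fun p =>
    (Real.norm_of_nonneg (gagIntegrand_nonneg w p)).trans_le (hwb p)

section DominatedConvergence

variable {ι : Type*} {l : Filter ι} [l.IsCountablyGenerated] {w : ι → Euc N → ℝ} {u : Euc N → ℝ}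

lemma tendsto_gagSq_of_dominated (hw : ∀ᶠ i in l, Measurable (w i)) {b : Euc N × Euc N → ℝ}
    (hb : Integrable b) (hwb : ∀ᶠ i in l, ∀ p, gagIntegrand N s (w i) p ≤ b p)
    (hlim : ∀ x, Tendsto (w · x) l (𝓝 (u x))) :
    Tendsto (fun i => gagSq N s (w i)) l (𝓝 (gagSq N s u)) := by
  refine tendsto_integral_filter_of_dominated_convergence b
    (hw.mono fun i hi => (measurable_gagIntegrand hi).aestronglyMeasurable)
    (hwb.mono fun i hi => .of_forall fun p => ?_) hb
    (.of_forall fun p => (((hlim p.1).sub (hlim p.2)).pow 2).div_const _)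
  exact (Real.norm_of_nonneg (gagIntegrand_nonneg (w i) p)).trans_le (hi p)

lemma tendsto_critInt_of_dominated (hp : 0 < twoStar N s)
    (hu : Integrable fun x => |u x| ^ twoStar N s) (hw : ∀ᶠ i in l, Measurable (w i))
    (hle : ∀ᶠ i in l, ∀ x, |w i x| ≤ |u x|) (hlim : ∀ x, Tendsto (w · x) l (𝓝 (u x))) :
    Tendsto (fun i => critInt N s (w i)) l (𝓝 (critInt N s u)) := by
  refine tendsto_integral_filter_of_dominated_convergence _
    (hw.mono fun i hi => (hi.norm.pow_const _).aestronglyMeasurable)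
    (hle.mono fun i hi => .of_forall fun x => ?_) hu
    (.of_forall fun x => (hlim x).abs.rpow_const (Or.inr hp.le))
  rw [Real.norm_of_nonneg (by positivity)]
  exact Real.rpow_le_rpow (abs_nonneg _) (hi x) hp.le

end DominatedConvergence

namespace MemHs

variable {Ω Ω' : Set (Euc N)} {u w : Euc N → ℝ}

lemma mono (hu : MemHs N s Ω u) (hΩ : Ω ⊆ Ω') : MemHs N s Ω' u :=
  ⟨hu.meas, hu.lp, hu.fin, hu.vanish.mono fun _ hx hxΩ' => hx fun hxΩ => hxΩ' (hΩ hxΩ)⟩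

lemma of_abs_le (hp : 0 < twoStar N s) (hu : MemHs N s Ω u) (hw : Measurable w)
    (hfin : GagFinite N s w) (hle : ∀ x, |w x| ≤ |u x|) : MemHs N s Ω w := by
  refine ⟨hw, hu.lp.mono' (hw.norm.pow_const _).aestronglyMeasurable (.of_forall fun x => ?_),
    hfin, hu.vanish.mono fun x hx hxΩ => abs_nonpos_iff.1 ?_⟩
  · rw [Real.norm_of_nonneg (by positivity)]
    exact Real.rpow_le_rpow (abs_nonneg _) (hle x) hp.le
  · simpa [hx hxΩ] using hle x

lemma setIntegral_eq_critInt (hp : twoStar N s ≠ 0) (hu : MemHs N s Ω u) :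
    ∫ x in Ω, |u x| ^ twoStar N s = critInt N s u :=
  setIntegral_eq_integral_of_ae_compl_eq_zero <| hu.vanish.mono fun x hx hxΩ => by
    rw [hx hxΩ, abs_zero, Real.zero_rpow hp]

lemma nehariFun_eq (hp : twoStar N s ≠ 0) (hu : MemHs N s Ω u) :
    nehariFun N s Ω u = gagSq N s u - critInt N s u := by
  rw [nehariFun, hu.setIntegral_eq_critInt hp]

lemma energy_eq (hp : twoStar N s ≠ 0) (hu : MemHs N s Ω u) :
    energy N s Ω u = 1 / 2 * gagSq N s u - 1 / twoStar N s * critInt N s u := by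
  rw [energy, hu.setIntegral_eq_critInt hp]

lemma critInt_pos_iff (hp : twoStar N s ≠ 0) (hu : MemHs N s Ω u) :
    0 < critInt N s u ↔ ¬ ∀ᵐ x, u x = 0 := by
  have hnonneg : 0 ≤ fun x => |u x| ^ twoStar N s := fun x => by positivity
  have hpow : ∀ x, |u x| ^ twoStar N s = 0 ↔ u x = 0 := fun x => by
    rw [Real.rpow_eq_zero (abs_nonneg _) hp, abs_eq_zero]
  rw [critInt, (integral_nonneg hnonneg).lt_iff_ne', ne_eq,
    integral_eq_zero_iff_of_nonneg hnonneg hu.lp]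
  simp only [EventuallyEq, Pi.zero_apply, hpow]

end MemHs

lemma gagIntegrand_comp_le {φ : ℝ → ℝ} (hφ : LipschitzWith 1 φ) (u : Euc N → ℝ)
    (p : Euc N × Euc N) : gagIntegrand N s (φ ∘ u) p ≤ gagIntegrand N s u p := by
  refine div_le_div_of_nonneg_right (sq_le_sq.2 ?_) (by positivity)
  simpa [Real.dist_eq] using hφ.dist_le_mul (u p.1) (u p.2)

lemma MemHs.comp_of_lipschitzWith_one (hp : 0 < twoStar N s) {Ω : Set (Euc N)} {u : Euc N → ℝ}
    (hu : MemHs N s Ω u) {φ : ℝ → ℝ} (hφ : LipschitzWith 1 φ) (hφ0 : φ 0 = 0) :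
    MemHs N s Ω (φ ∘ u) := by
  have hmeas := hφ.continuous.measurable.comp hu.meas
  exact hu.of_abs_le hp hmeas (gagFinite_of_le hmeas hu.fin (gagIntegrand_comp_le hφ u))
    fun x => abs_le_of_lipschitzWith_one hφ hφ0 (u x)

/-- The integrable function dominating `gagIntegrand N s (cutoff R * u)` for all `R ≥ 1` when `u` is
square-integrable and has finite Gagliardo seminorm. -/
def cutoffMajorant (N : ℕ) (s : ℝ) (u : Euc N → ℝ) (p : Euc N × Euc N) : ℝ :=
  2 * gagIntegrand N s u p + 2 * (u p.2 ^ 2 * truncatedKernel ((N : ℝ) + 2 * s) (p.1 - p.2))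

lemma gagIntegrand_cutoff_mul_le {R : ℝ} (hR : 1 ≤ R) (u : Euc N → ℝ) (p : Euc N × Euc N) :
    gagIntegrand N s (cutoff R * u) p ≤ cutoffMajorant N s u p := by
  have hdiff := cutoff_sub_sq_le hR p.1 p.2
  have hsq : cutoff R p.1 ^ 2 ≤ 1 := pow_le_one₀ (cutoff_nonneg _ _) (cutoff_le_one _ _)
  simp only [gagIntegrand, cutoffMajorant, truncatedKernel, dist_eq_norm, Pi.mul_apply,
    mul_div_assoc', ← add_div]
  refine div_le_div_of_nonneg_right ?_ (by positivity)
  set c := cutoff R p.1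
  set d := cutoff R p.2
  calc (c * u p.1 - d * u p.2) ^ 2
      = (c * (u p.1 - u p.2) + (c - d) * u p.2) ^ 2 := by ring
    _ ≤ 2 * ((c * (u p.1 - u p.2)) ^ 2 + ((c - d) * u p.2) ^ 2) := add_sq_le
    _ = 2 * (c ^ 2 * (u p.1 - u p.2) ^ 2) + 2 * (u p.2 ^ 2 * (c - d) ^ 2) := by ring
    _ ≤ 2 * (1 * (u p.1 - u p.2) ^ 2) + 2 * (u p.2 ^ 2 * min 1 (‖p.1 - p.2‖ ^ 2)) := by gcongr
    _ = 2 * (u p.1 - u p.2) ^ 2 + 2 * (u p.2 ^ 2 * min 1 (‖p.1 - p.2‖ ^ 2)) := by rw [one_mul]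

lemma integrable_cutoffMajorant (hN : N ≠ 0) (hs0 : 0 < s) (hs1 : s < 1) {u : Euc N → ℝ}
    (hu : GagFinite N s u) (hu2 : Integrable fun x => u x ^ 2) :
    Integrable (cutoffMajorant N s u) := by
  have : NeZero N := ⟨hN⟩
  have hker : Integrable (truncatedKernel ((N : ℝ) + 2 * s) : Euc N → ℝ) :=
    integrable_truncatedKernel volume (by rw [finrank_euclideanSpace_fin]; linarith)
      (by rw [finrank_euclideanSpace_fin]; linarith)
  exact (hu.const_mul 2).add
    ((hu2.convolution_integrand (ContinuousLinearMap.mul ℝ ℝ) hker).const_mul 2)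

lemma abs_cutoff_mul_le (R : ℝ) (u : Euc N → ℝ) (x : Euc N) : |cutoff R x * u x| ≤ |u x| := by
  rw [abs_mul, abs_of_nonneg (cutoff_nonneg R x)]
  exact mul_le_of_le_one_left (abs_nonneg _) (cutoff_le_one R x)

/-- The rescaling `x ↦ r^((N-2s)/2) w(r (x - x₀))`; the exponent makes both `gagSq` and `critInt`
invariant. -/
def dilate (N : ℕ) (s r : ℝ) (x₀ : Euc N) (w : Euc N → ℝ) (x : Euc N) : ℝ :=
  r ^ (((N : ℝ) - 2 * s) / 2) * w (r • (x - x₀))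

section Dilate

variable {r : ℝ} (x₀ : Euc N) (w : Euc N → ℝ)

lemma gagIntegrand_dilate (hr : 0 < r) (p : Euc N × Euc N) :
    gagIntegrand N s (dilate N s r x₀ w) p =
      r ^ (N + N) * gagIntegrand N s w (r • (p - (x₀, x₀))) := by
  have hdist : dist (r • (p.1 - x₀)) (r • (p.2 - x₀)) = r * dist p.1 p.2 := by
    rw [dist_smul₀, dist_sub_right, Real.norm_of_nonneg hr.le]
  have hexp : (r ^ (((N : ℝ) - 2 * s) / 2)) ^ 2 * r ^ ((N : ℝ) + 2 * s) = r ^ (N + N) := by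
    rw [← Real.rpow_natCast, ← Real.rpow_natCast, ← Real.rpow_mul hr.le, ← Real.rpow_add hr]
    congr 1; push_cast; ring
  simp only [gagIntegrand, dilate, Prod.smul_fst, Prod.smul_snd, Prod.fst_sub, Prod.snd_sub, hdist]
  rw [Real.mul_rpow hr.le dist_nonneg, ← hexp, ← mul_sub, mul_pow]
  field_simp

lemma abs_dilate_rpow_twoStar (hsN : 2 * s ≠ N) (hr : 0 < r) (x : Euc N) :
    |dilate N s r x₀ w x| ^ twoStar N s = r ^ N * |w (r • (x - x₀))| ^ twoStar N s := by
  have hexp : ((N : ℝ) - 2 * s) / 2 * twoStar N s = N := by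
    have : (N : ℝ) - 2 * s ≠ 0 := sub_ne_zero.2 hsN.symm
    rw [twoStar]; field_simp
  rw [dilate, abs_mul, abs_of_pos (by positivity), Real.mul_rpow (by positivity) (abs_nonneg _),
    ← Real.rpow_mul hr.le, hexp, Real.rpow_natCast]

lemma isAddHaarMeasure_volume_prod (N : ℕ) :
    (volume : Measure (Euc N × Euc N)).IsAddHaarMeasure :=
  inferInstanceAs ((volume : Measure (Euc N)).prod volume).IsAddHaarMeasure

lemma gagSq_dilate (hr : 0 < r) : gagSq N s (dilate N s r x₀ w) = gagSq N s w := by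
  have := isAddHaarMeasure_volume_prod N
  calc ∫ p, gagIntegrand N s (dilate N s r x₀ w) p
      = r ^ (N + N) * ∫ p, gagIntegrand N s w (r • (p - (x₀, x₀))) := by
        simp_rw [gagIntegrand_dilate x₀ w hr, integral_const_mul]
    _ = r ^ (N + N) * ∫ p, gagIntegrand N s w (r • p) := by
        rw [integral_sub_right_eq_self (fun p => gagIntegrand N s w (r • p))]
    _ = ∫ p, gagIntegrand N s w p := by
        rw [Measure.integral_comp_smul, finrank_prod, finrank_euclideanSpace_fin,
          abs_of_pos (by positivity), smul_eq_mul, mul_inv_cancel_left₀ (by positivity)]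

lemma critInt_dilate (hsN : 2 * s ≠ N) (hr : 0 < r) :
    critInt N s (dilate N s r x₀ w) = critInt N s w := by
  calc ∫ x, |dilate N s r x₀ w x| ^ twoStar N s
      = r ^ N * ∫ x, |w (r • (x - x₀))| ^ twoStar N s := by
        simp_rw [abs_dilate_rpow_twoStar x₀ w hsN hr, integral_const_mul]
    _ = r ^ N * ∫ x, |w (r • x)| ^ twoStar N s := by
        rw [integral_sub_right_eq_self (fun x => |w (r • x)| ^ twoStar N s)]
    _ = ∫ x, |w x| ^ twoStar N s := by
        rw [Measure.integral_comp_smul volume (fun x => |w x| ^ twoStar N s),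
          finrank_euclideanSpace_fin, abs_of_pos (by positivity), smul_eq_mul,
          mul_inv_cancel_left₀ (by positivity)]

variable {x₀ w}

lemma MemHs.dilate (hsN : 2 * s ≠ N) (hr : 0 < r) {Ω Ω' : Set (Euc N)} (hw : MemHs N s Ω w)
    (hΩ' : ∀ x ∉ Ω', w (r • (x - x₀)) = 0) : MemHs N s Ω' (dilate N s r x₀ w) := by
  have := isAddHaarMeasure_volume_prod N
  refine ⟨?_, ?_, ?_, .of_forall fun x hx => by simp [_root_.dilate, hΩ' x hx]⟩
  · exact (hw.meas.comp ((measurable_id.sub_const x₀).const_smul r)).const_mul _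
  · simp_rw [abs_dilate_rpow_twoStar x₀ w hsN hr]
    exact (((integrable_comp_smul_iff volume (fun x => |w x| ^ twoStar N s) hr.ne').2
      hw.lp).comp_sub_right x₀).const_mul _
  · change Integrable (gagIntegrand N s _)
    rw [funext (gagIntegrand_dilate x₀ w hr)]
    exact (((integrable_comp_smul_iff volume (gagIntegrand N s w) hr.ne').2
      hw.fin).comp_sub_right (x₀, x₀)).const_mul _

end Dilate

section ConstMul

variable (t : ℝ) (u : Euc N → ℝ)

lemma gagIntegrand_const_mul (p : Euc N × Euc N) :
    gagIntegrand N s (fun x => t * u x) p = t ^ 2 * gagIntegrand N s u p := by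
  simp only [gagIntegrand]; ring

lemma abs_const_mul_rpow (α a : ℝ) : |t * a| ^ α = |t| ^ α * |a| ^ α := by
  rw [abs_mul, Real.mul_rpow (abs_nonneg _) (abs_nonneg _)]

lemma gagSq_const_mul : gagSq N s (fun x => t * u x) = t ^ 2 * gagSq N s u :=
  (integral_congr_ae (.of_forall (gagIntegrand_const_mul t u))).trans (integral_const_mul _ _)

lemma critInt_const_mul :
    critInt N s (fun x => t * u x) = |t| ^ twoStar N s * critInt N s u := by
  simp only [critInt, abs_const_mul_rpow, integral_const_mul]

variable {u}

lemma MemHs.const_mul {Ω : Set (Euc N)} (hu : MemHs N s Ω u) :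
    MemHs N s Ω fun x => t * u x := by
  refine ⟨hu.meas.const_mul t, ?_, ?_, hu.vanish.mono fun x hx hxΩ => by rw [hx hxΩ, mul_zero]⟩
  · simpa only [abs_const_mul_rpow] using hu.lp.const_mul _
  · exact (hu.fin.const_mul (t ^ 2)).congr
      (.of_forall fun p => (gagIntegrand_const_mul t u p).symm)

end ConstMul

variable {G : Subgroup (ONgrp N)} {σ : G →* ℤˣ}

namespace IsEquivariant

variable {u : Euc N → ℝ}

lemma comp_odd (hu : IsEquivariant G σ u) {φ : ℝ → ℝ} (hφ : ∀ t, φ (-t) = -φ t) :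
    IsEquivariant G σ (φ ∘ u) := fun g x => by
  rcases Int.units_eq_one_or (σ g) with h | h <;> simp [hu g x, h, hφ]

lemma invariant_mul (hu : IsEquivariant G σ u) {η : Euc N → ℝ}
    (hη : ∀ (g : G) x, η (ogAct (g : ONgrp N) x) = η x) : IsEquivariant G σ (η * u) :=
  fun g x => by rw [Pi.mul_apply, hη, hu, Pi.mul_apply, mul_left_comm]

lemma dilate (hu : IsEquivariant G σ u) {x₀ : Euc N}
    (hx₀ : ∀ g : G, ogAct (g : ONgrp N) x₀ = x₀) (s r : ℝ) :
    IsEquivariant G σ (dilate N s r x₀ u) := fun g x => by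
  have hcomm : r • (ogAct (g : ONgrp N) x - x₀) = ogAct (g : ONgrp N) (r • (x - x₀)) := by
    conv_lhs => rw [← hx₀ g]
    simp only [ogAct, map_smul, map_sub]
  rw [_root_.dilate, hcomm, hu, _root_.dilate, mul_left_comm]

end IsEquivariant

/-- The space `Ḣ^s(Ω)^σ_G`. -/
def equivariantHs (N : ℕ) (s : ℝ) (Ω : Set (Euc N)) (G : Subgroup (ONgrp N)) (σ : G →* ℤˣ) :
    Set (Euc N → ℝ) :=
  {u | MemHs N s Ω u ∧ IsEquivariant G σ u}

lemma equivariantHs_mono {Ω Ω' : Set (Euc N)} (hΩ : Ω ⊆ Ω') :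
    equivariantHs N s Ω G σ ⊆ equivariantHs N s Ω' G σ :=
  fun _ hu => ⟨hu.1.mono hΩ, hu.2⟩

lemma gagCrit_mem_closure_sq_integrable (hp : 2 ≤ twoStar N s) {Ω : Set (Euc N)} {u : Euc N → ℝ}
    (hu : u ∈ equivariantHs N s Ω G σ) :
    gagCrit N s u ∈ closure
      (gagCrit N s '' (equivariantHs N s Ω G σ ∩ {w | Integrable fun x => w x ^ 2})) := by
  have hp0 : 0 < twoStar N s := by linarith
  obtain ⟨hu, heq⟩ := hu
  have hmem : ∀ {e : ℝ}, 0 < e → MemHs N s Ω (softThreshold e ∘ u) := fun he =>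
    hu.comp_of_lipschitzWith_one hp0 (lipschitzWith_softThreshold _) (softThreshold_zero he.le)
  have hpos : ∀ᶠ e : ℝ in 𝓝[>] 0, 0 < e := self_mem_nhdsWithin
  have hmeas := hpos.mono fun e he => (hmem he).meas
  have hlim x := tendsto_softThreshold (u x)
  have hgag := tendsto_gagSq_of_dominated hmeas hu.fin
    (.of_forall fun e => gagIntegrand_comp_le (lipschitzWith_softThreshold e) u) hlim
  have hcrit := tendsto_critInt_of_dominated hp0 hu.lp hmeas (hpos.mono fun e he x =>
    abs_le_of_lipschitzWith_one (lipschitzWith_softThreshold e) (softThreshold_zero he.le) (u x))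
    hlim
  refine mem_closure_of_tendsto (hgag.prodMk_nhds hcrit) (hpos.mono fun e he =>
    mem_image_of_mem (gagCrit N s) ⟨⟨hmem he, heq.comp_odd (softThreshold_neg he.le)⟩, ?_⟩)
  refine (hu.lp.const_mul (e ^ (2 - twoStar N s))).mono'
    ((hmem he).meas.pow_const 2).aestronglyMeasurable (.of_forall fun x => ?_)
  rw [Real.norm_of_nonneg (sq_nonneg _)]
  exact softThreshold_sq_le he hp (u x)

lemma gagCrit_mem_closure_bounded_support (hs0 : 0 < s) (hs1 : s < 1) (hsN : 2 * s < N)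
    {Ω : Set (Euc N)} {u : Euc N → ℝ} (hu : u ∈ equivariantHs N s Ω G σ)
    (hu2 : Integrable fun x => u x ^ 2) :
    gagCrit N s u ∈ closure
      (gagCrit N s '' (equivariantHs N s Ω G σ ∩ {w | IsBounded (support w)})) := by
  have hp0 : 0 < twoStar N s := by linarith [two_lt_twoStar hs0 hsN]
  have hN : N ≠ 0 := by rintro rfl; norm_num at hsN; linarith
  obtain ⟨hu, heq⟩ := hu
  have hmaj := integrable_cutoffMajorant hN hs0 hs1 hu.fin hu2
  have hmeas : ∀ {R : ℝ}, 1 ≤ R → Measurable (cutoff R * u) := fun hR =>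
    (lipschitzWith_cutoff hR).continuous.measurable.mul hu.meas
  have hmem : ∀ {R : ℝ}, 1 ≤ R → MemHs N s Ω (cutoff R * u) := fun {R} hR =>
    hu.of_abs_le hp0 (hmeas hR)
      (gagFinite_of_le (hmeas hR) hmaj (gagIntegrand_cutoff_mul_le hR u)) (abs_cutoff_mul_le R u)
  have hlarge : ∀ᶠ R : ℝ in atTop, 1 ≤ R := eventually_ge_atTop 1
  have hlim x : Tendsto (fun R => cutoff R x * u x) atTop (𝓝 (u x)) := by
    simpa using (tendsto_cutoff_atTop x).mul_const (u x)
  have hgag := tendsto_gagSq_of_dominated (hlarge.mono fun R hR => hmeas hR) hmaj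
    (hlarge.mono fun R hR => gagIntegrand_cutoff_mul_le hR u) hlim
  have hcrit := tendsto_critInt_of_dominated hp0 hu.lp (hlarge.mono fun R hR => hmeas hR)
    (.of_forall fun R => abs_cutoff_mul_le R u) hlim
  refine mem_closure_of_tendsto (hgag.prodMk_nhds hcrit) (hlarge.mono fun R hR =>
    mem_image_of_mem (gagCrit N s) ⟨⟨hmem hR, heq.invariant_mul fun g x => ?_⟩, ?_⟩)
  · rw [cutoff, norm_ogAct, cutoff]
  · have hbdd : IsBounded (support (cutoff R : Euc N → ℝ)) :=
      isBounded_support_cutoff (one_pos.trans_le hR)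
    exact hbdd.subset (support_mul_subset_left _ _)

lemma gagCrit_mem_image_of_bounded_support (hsN : 2 * s ≠ N) {Ω Ω' : Set (Euc N)} {x₀ : Euc N}
    (hΩ' : Ω' ∈ 𝓝 x₀) (hx₀ : ∀ g : G, ogAct (g : ONgrp N) x₀ = x₀) {w : Euc N → ℝ}
    (hw : w ∈ equivariantHs N s Ω G σ) (hbdd : IsBounded (support w)) :
    gagCrit N s w ∈ gagCrit N s '' equivariantHs N s Ω' G σ := by
  obtain ⟨r, hr, hzero⟩ := exists_dilation_eq_zero_off_nhds hbdd hΩ'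
  refine ⟨dilate N s r x₀ w, ⟨hw.1.dilate hsN hr hzero, hw.2.dilate hx₀ s r⟩, ?_⟩
  rw [gagCrit, gagSq_dilate x₀ w hr, critInt_dilate x₀ w hsN hr, gagCrit]

lemma gagCrit_image_subset_closure (hs0 : 0 < s) (hs1 : s < 1) (hsN : 2 * s < N)
    {Ω Ω' : Set (Euc N)} {x₀ : Euc N} (hΩ' : Ω' ∈ 𝓝 x₀)
    (hx₀ : ∀ g : G, ogAct (g : ONgrp N) x₀ = x₀) :
    gagCrit N s '' equivariantHs N s Ω G σ ⊆
      closure (gagCrit N s '' equivariantHs N s Ω' G σ) := by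
  rintro _ ⟨u, hu, rfl⟩
  refine closure_minimal ?_ isClosed_closure
    (gagCrit_mem_closure_sq_integrable (two_lt_twoStar hs0 hsN).le hu)
  rintro _ ⟨v, ⟨hv, hv2⟩, rfl⟩
  refine closure_mono ?_ (gagCrit_mem_closure_bounded_support hs0 hs1 hsN hv hv2)
  rintro _ ⟨w, ⟨hw, hbdd⟩, rfl⟩
  exact gagCrit_mem_image_of_bounded_support hsN.ne hΩ' hx₀ hw hbdd

/-- The factor `t = (A / B)^(1/(p-2))`, for `z = (A, B)`, solving `t^p B = t² A`: with `p = 2*_s` it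
rescales a function with `gagCrit N s u = z` onto the Nehari manifold. -/
def nehariScale (p : ℝ) (z : ℝ × ℝ) : ℝ := (z.1 / z.2) ^ (p - 2)⁻¹

/-- The energy of a function with `gagCrit N s u = z` after its rescaling by
`nehariScale (twoStar N s) z` onto the Nehari manifold. -/
def projectedEnergy (p : ℝ) (z : ℝ × ℝ) : ℝ := (1 / 2 - 1 / p) * (nehariScale p z ^ 2 * z.1)

section NehariScale

variable {p : ℝ} {z : ℝ × ℝ}

lemma nehariScale_pos (hz : z ∈ Ioi (0 : ℝ) ×ˢ Ioi (0 : ℝ)) : 0 < nehariScale p z :=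
  Real.rpow_pos_of_pos (div_pos hz.1 hz.2) _

lemma nehariScale_rpow_mul (hp : p ≠ 2) (hz : z ∈ Ioi (0 : ℝ) ×ˢ Ioi (0 : ℝ)) :
    nehariScale p z ^ p * z.2 = nehariScale p z ^ 2 * z.1 := by
  have hz2 : z.2 ≠ 0 := hz.2.ne'
  have hscale : nehariScale p z ^ (p - 2) = z.1 / z.2 :=
    Real.rpow_inv_rpow (div_pos hz.1 hz.2).le (sub_ne_zero.2 hp)
  calc nehariScale p z ^ p * z.2 = nehariScale p z ^ 2 * nehariScale p z ^ (p - 2) * z.2 := by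
        rw [← Real.rpow_two, ← Real.rpow_add (nehariScale_pos hz), add_sub_cancel]
    _ = nehariScale p z ^ 2 * z.1 := by rw [hscale]; field_simp

lemma continuousAt_projectedEnergy (hz : z ∈ Ioi (0 : ℝ) ×ˢ Ioi (0 : ℝ)) :
    ContinuousAt (projectedEnergy p) z := by
  have hscale : ContinuousAt (nehariScale p) z :=
    (continuousAt_fst.div continuousAt_snd hz.2.ne').rpow_const (Or.inl (div_pos hz.1 hz.2).ne')
  exact continuousAt_const.mul ((hscale.pow 2).mul continuousAt_fst)

end NehariScale

/-- The energies of the elements of the Nehari manifold `N(Ω)^σ_G`; `mval` is their infimum. -/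
def nehariEnergies (N : ℕ) (s : ℝ) (Ω : Set (Euc N)) (G : Subgroup (ONgrp N)) (σ : G →* ℤˣ) :
    Set ℝ :=
  {c | ∃ u : Euc N → ℝ, MemHs N s Ω u ∧ IsEquivariant G σ u ∧
    ¬ (∀ᵐ x : Euc N, u x = 0) ∧ nehariFun N s Ω u = 0 ∧ c = energy N s Ω u}

lemma nehariEnergies_eq_image (hp : 2 < twoStar N s) (Ω : Set (Euc N)) :
    nehariEnergies N s Ω G σ = projectedEnergy (twoStar N s) ''
      (gagCrit N s '' equivariantHs N s Ω G σ ∩ Ioi 0 ×ˢ Ioi 0) := by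
  have hp0 : twoStar N s ≠ 0 := by linarith
  ext c
  constructor
  · rintro ⟨u, hu, heq, hne, hneh, rfl⟩
    have hpos : 0 < critInt N s u := (hu.critInt_pos_iff hp0).2 hne
    have hAB : gagSq N s u = critInt N s u := by
      rwa [hu.nehariFun_eq hp0, sub_eq_zero] at hneh
    refine ⟨gagCrit N s u, ⟨⟨u, ⟨hu, heq⟩, rfl⟩, hpos.trans_eq hAB.symm, hpos⟩, ?_⟩
    rw [hu.energy_eq hp0, projectedEnergy, nehariScale, gagCrit, hAB, div_self hpos.ne',
      Real.one_rpow, one_pow, one_mul, sub_mul]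
  · rintro ⟨_, ⟨⟨w, ⟨hw, heq⟩, rfl⟩, hpos⟩, rfl⟩
    set t := nehariScale (twoStar N s) (gagCrit N s w)
    have ht : 0 < t := nehariScale_pos hpos
    have htw := hw.const_mul t
    have hcrit : critInt N s (fun x => t * w x) = t ^ 2 * gagSq N s w := by
      rw [critInt_const_mul, abs_of_pos ht]
      exact nehariScale_rpow_mul hp.ne' hpos
    have hA : 0 < gagSq N s w := hpos.1
    refine ⟨_, htw, heq.comp_odd (φ := (t * ·)) (mul_neg t), (htw.critInt_pos_iff hp0).1 ?_, ?_, ?_⟩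
    · rw [hcrit]; positivity
    · rw [htw.nehariFun_eq hp0, gagSq_const_mul, hcrit, sub_self]
    · rw [htw.energy_eq hp0, gagSq_const_mul, hcrit, ← sub_mul]; rfl

theorem statement9_general (hs0 : 0 < s) (hs1 : s < 1) (hsN : 2 * s < N)
    (G : Subgroup (ONgrp N)) (σ : G →* ℤˣ) {Ω : Set (Euc N)} {x₀ : Euc N} (hΩ : Ω ∈ 𝓝 x₀)
    (hx₀ : ∀ g : G, ogAct (g : ONgrp N) x₀ = x₀) :
    closure (nehariEnergies N s Ω G σ) = closure (nehariEnergies N s univ G σ) := by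
  simp only [nehariEnergies_eq_image (two_lt_twoStar hs0 hsN)]
  refine (closure_mono ?_).antisymm (closure_minimal ?_ isClosed_closure)
  · gcongr
    exact equivariantHs_mono (subset_univ Ω)
  · rintro _ ⟨z, ⟨hz, hpos⟩, rfl⟩
    refine mem_closure_image (continuousAt_projectedEnergy hpos) ?_
    exact (isOpen_Ioi.prod isOpen_Ioi).closure_inter
      ⟨gagCrit_image_subset_closure hs0 hs1 hsN hΩ hx₀ hz, hpos⟩

end

/-- if `Ω` is a `G`-invariant nonempty open domain with a `G`-fixed point,
then `m(Ω)^σ_G = m(ℝ^N)^σ_G`. -/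
theorem statement9 (N : ℕ) (s : ℝ) (hN : 2 ≤ N) (hs0 : 0 < s) (hs1 : s < 1)
    (hsN : 2 * s < N)
    (G : Subgroup (ONgrp N)) (hGc : IsClosed (G : Set (ONgrp N)))
    (σ : G →* ℤˣ) (hσ : Continuous σ) (hσs : Function.Surjective σ) (hG2 : CondG2 G σ)
    (Ω : Set (Euc N)) (hΩ : IsOpen Ω) (hΩne : Ω.Nonempty) (hΩG : IsInvariantSet G Ω)
    (hfix : ∃ x ∈ Ω, ∀ g : G, ogAct (g : ONgrp N) x = x) :
    mval N s Ω G σ = mval N s Set.univ G σ := by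
  obtain ⟨x₀, hx₀Ω, hx₀⟩ := hfix
  have hcl := statement9_general hs0 hs1 hsN G σ (hΩ.mem_nhds hx₀Ω) hx₀
  exact (sInf_closure_real _).symm.trans ((congrArg sInf hcl).trans (sInf_closure_real _))

end
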